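/- arXiv:1209.1035 — 2 statements merged into one kernel-verified Lean document; each statement's English description precedes it below -/
import Mathlib

section
/- Let g : ℂ → ℂ be a smooth function with compact support. Then there exists a smooth function f : ℂ → ℂ with compact support such that ∂̄f = g if and only if ∫_ℂ zⁿ · g(z) dA(z) = 0 for every natural number n ≥ 0. (This is the concrete form of the paper's computation H¹_c(ℂ¹, 𝒪) ≅ { Σ_{i<0} aᵢ zⁱ : the series converges at infinity }: the class of the (0,1)-form g dz̄ in H¹_c(ℂ, 𝒪) vanishes exactly when all moments of g vanish.) -/
/-!
If `∂̄f = g` with `f` of compact support, integrating by parts against the holomorphic function `zⁿ`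
kills every moment of `g`.

Conversely, the Cauchy transform `f(z) = π⁻¹ ∫ t⁻¹ g(z - t) dA(t)` always solves `∂̄f = g`: it is a
convolution with the locally integrable kernel `1 / t`, hence smooth, and `∂̄` may be moved onto `g`,
after which the Cauchy–Pompeiu formula at the origin, `∫ t⁻¹ ∂̄h(t) dA(t) = -π h(0)`
(`integral_inv_mul_dbar`), applies. That formula is proved in polar coordinates, where
`r · (r e^{iθ})⁻¹ ∂̄h = (∂_r h + (i / r) ∂_θ h) / 2`: the radial term integrates to `-π h(0)` and the
angular one to zero by periodicity. Finally, if `supp g` lies in the disc of radius `R` and all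
moments of `g` vanish, subtracting the first `n` terms of the expansion of `1 / (z - w)` in powers of
`w / z` gives `π f(z) = ∫ (w / z)ⁿ (z - w)⁻¹ g(w) dA(w)` for every `n`, which tends to `0` as
`n → ∞` when `|z| > R` (`integral_inv_sub_mul_eq_zero`). So `f` is supported in the closed disc.
-/

open MeasureTheory Complex

/-- The Wirtinger derivative `∂̄f(z) = (1/2)(∂f/∂x + i ∂f/∂y)(z)`. -/
noncomputable def dbar (f : ℂ → ℂ) (z : ℂ) : ℂ :=
  (1 / 2 : ℂ) * ((fderiv ℝ f z) 1 + Complex.I • (fderiv ℝ f z) Complex.I)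

/-- The point `e^{iθ}` of the unit circle, in the form produced by `Complex.polarCoord`. -/
noncomputable def unitPt (θ : ℝ) : ℂ := Real.cos θ + Real.sin θ * I

lemma continuous_unitPt : Continuous unitPt := by
  unfold unitPt; fun_prop

lemma hasDerivAt_unitPt (θ : ℝ) : HasDerivAt unitPt (I * unitPt θ) θ := by
  have h := (Real.hasDerivAt_cos θ).ofReal_comp.add
    ((Real.hasDerivAt_sin θ).ofReal_comp.mul_const I)
  refine HasDerivAt.congr_deriv h ?_
  simp only [unitPt]
  push_cast
  linear_combination -Complex.sin θ * I_sq

lemma norm_unitPt (θ : ℝ) : ‖unitPt θ‖ = 1 := by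
  simp [unitPt, norm_cos_add_sin_mul_I]

/-- The expression of `∂̄` in polar coordinates, divided by `r e^{iθ}` and multiplied by the Jacobian
`r`. When `z = r e^{iθ}`, the two terms on the right are `∂_r h / 2` and `(i / (2 r)) ∂_θ h`. Written with
`fderiv`, they are visibly continuous up to `r = 0`. -/
lemma dbar_polar (h : ℂ → ℂ) (r : ℝ) (hr : 0 < r) (θ : ℝ) (z : ℂ) :
    r • (((r * unitPt θ : ℂ))⁻¹ * dbar h z) =
      (1 / 2 : ℂ) * fderiv ℝ h z (unitPt θ) + I / 2 * fderiv ℝ h z (I * unitPt θ) := by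
  set L := fderiv ℝ h z with hL
  have h1 : L (unitPt θ) = Real.cos θ * L 1 + Real.sin θ * L I := by
    have : unitPt θ = Real.cos θ • (1 : ℂ) + Real.sin θ • I := by
      simp [unitPt]
    rw [this, map_add, map_smul, map_smul]; simp
  have h2 : L (I * unitPt θ) = -Real.sin θ * L 1 + Real.cos θ * L I := by
    have : I * unitPt θ = (-Real.sin θ) • (1 : ℂ) + Real.cos θ • I := by
      simp only [unitPt, real_smul]; push_cast; linear_combination (Complex.sin θ) * I_sq
    rw [this, map_add, map_smul, map_smul]; simp
  have h3 : (unitPt θ)⁻¹ = Real.cos θ - Real.sin θ * I := by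
    refine inv_eq_of_mul_eq_one_right ?_
    simp only [unitPt]; push_cast
    linear_combination Complex.sin_sq_add_cos_sq θ - Complex.sin θ ^ 2 * I_sq
  have hr' : (r : ℂ) ≠ 0 := by exact_mod_cast hr.ne'
  rw [h1, h2, mul_inv, h3, dbar, ← hL, real_smul, smul_eq_mul]
  field_simp
  linear_combination -Real.sin θ * L I * I_sq

/-- A continuous function of `(r, θ)` vanishing for large `r` is integrable on the domain of polar
coordinates. -/
lemma integrableOn_polar {K : ℝ × ℝ → ℂ} (hK : Continuous K) {R : ℝ}
    (hR : ∀ p : ℝ × ℝ, R < p.1 → K p = 0) :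
    IntegrableOn K (Set.Ioi 0 ×ˢ Set.Ioo (-Real.pi) Real.pi) := by
  have h1 : IntegrableOn K (Set.Icc 0 R ×ˢ Set.Icc (-Real.pi) Real.pi) :=
    hK.continuousOn.integrableOn_compact (isCompact_Icc.prod isCompact_Icc)
  refine h1.of_forall_sdiff_eq_zero (measurableSet_Ioi.prod measurableSet_Ioo) ?_
  rintro ⟨r, θ⟩ ⟨⟨h1, h2⟩, h3⟩
  apply hR
  by_contra! hc
  exact h3 ⟨⟨le_of_lt h1, hc⟩, ⟨h2.1.le, h2.2.le⟩⟩

lemma exists_radius {E : Type*} [Zero E] {h : ℂ → E} (hc : HasCompactSupport h) :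
    ∃ R : ℝ, 0 < R ∧ ∀ z, R < ‖z‖ → h z = 0 := by
  obtain ⟨R, hR, h2⟩ := hc.isCompact.isBounded.exists_pos_norm_le
  refine ⟨R, hR, fun z hz => ?_⟩
  by_contra hne
  exact absurd (h2 z (subset_tsupport _ hne)) (not_le.mpr hz)

lemma integral_radial {h : ℂ → ℂ} (hh : ContDiff ℝ 1 h) (hc : HasCompactSupport h) (θ : ℝ) :
    ∫ r in Set.Ioi (0 : ℝ), (1 / 2 : ℂ) * fderiv ℝ h (r * unitPt θ) (unitPt θ) = -(1 / 2) * h 0 := by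
  obtain ⟨R, hR0, hR⟩ := exists_radius hc
  have hF : ContDiff ℝ 1 (fun r : ℝ => h (r * unitPt θ)) := by
    refine hh.comp ?_
    exact (ofRealCLM.contDiff).mul contDiff_const
  have hFc : HasCompactSupport (fun r : ℝ => h (r * unitPt θ)) := by
    refine HasCompactSupport.intro (isCompact_closedBall (0 : ℝ) R) fun r hr => hR _ ?_
    simpa [norm_unitPt] using hr
  have hd : ∀ r : ℝ, deriv (fun r : ℝ => h (r * unitPt θ)) r =
      fderiv ℝ h (r * unitPt θ) (unitPt θ) := by
    intro r
    have h1 : HasDerivAt (fun r : ℝ => (r : ℂ) * unitPt θ) (unitPt θ) r := by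
      simpa using (hasDerivAt_id r).ofReal_comp.mul_const (unitPt θ)
    exact ((hh.differentiable one_ne_zero _).hasFDerivAt.comp_hasDerivAt r h1).deriv
  have := hFc.integral_Ioi_deriv_eq hF 0
  simp only [hd] at this
  rw [integral_const_mul, this]
  simp

lemma integral_angular {h : ℂ → ℂ} (hh : ContDiff ℝ 1 h) {r : ℝ} (hr : 0 < r) :
    ∫ θ in Set.Ioo (-Real.pi) Real.pi, I / 2 * fderiv ℝ h (r * unitPt θ) (I * unitPt θ) = 0 := by
  have hd : ∀ θ : ℝ, HasDerivAt (fun θ : ℝ => I / (2 * r) * h (r * unitPt θ))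
      (I / 2 * fderiv ℝ h (r * unitPt θ) (I * unitPt θ)) θ := by
    intro θ
    have h1 := (hasDerivAt_unitPt θ).const_mul (r : ℂ)
    have h2 := ((hh.differentiable one_ne_zero (r * unitPt θ)).hasFDerivAt.comp_hasDerivAt θ
      h1).const_mul (I / (2 * r))
    refine h2.congr_deriv ?_
    have : (r : ℂ) * (I * unitPt θ) = r • (I * unitPt θ) := by simp
    rw [this, map_smul, real_smul]
    have : (r : ℂ) ≠ 0 := by exact_mod_cast hr.ne'
    field_simp
  have hcont : Continuous fun θ : ℝ => I / 2 * fderiv ℝ h (r * unitPt θ) (I * unitPt θ) := by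
    have := hh.continuous_fderiv one_ne_zero
    have := continuous_unitPt
    fun_prop
  rw [← integral_Ioc_eq_integral_Ioo, ← intervalIntegral.integral_of_le (by linarith [Real.pi_pos]),
    intervalIntegral.integral_eq_sub_of_hasDerivAt (fun θ _ => hd θ)
      (hcont.intervalIntegrable _ _)]
  simp [unitPt]

/-- The Cauchy–Pompeiu formula at the origin for compactly supported functions. -/
lemma integral_inv_mul_dbar {h : ℂ → ℂ} (hh : ContDiff ℝ 1 h) (hc : HasCompactSupport h) :
    ∫ t : ℂ, t⁻¹ * dbar h t = -Real.pi * h 0 := by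
  obtain ⟨R, -, hR⟩ := exists_radius (hc.fderiv ℝ)
  have hcd := hh.continuous_fderiv one_ne_zero
  have hcu := continuous_unitPt
  have hR' : ∀ p : ℝ × ℝ, R < p.1 → fderiv ℝ h (p.1 * unitPt p.2) = 0 := fun p hp => by
    apply hR
    rw [norm_mul, norm_unitPt, mul_one, norm_real]
    exact hp.trans_le (le_abs_self _)
  have hA := integrableOn_polar
    (K := fun p => (1 / 2 : ℂ) * fderiv ℝ h (p.1 * unitPt p.2) (unitPt p.2)) (R := R)
    (by fun_prop) (fun p hp => by simp [hR' p hp])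
  have hB := integrableOn_polar
    (K := fun p => I / 2 * fderiv ℝ h (p.1 * unitPt p.2) (I * unitPt p.2)) (R := R)
    (by fun_prop) (fun p hp => by simp [hR' p hp])
  rw [← Complex.integral_comp_polarCoord_symm]
  have hS : polarCoord.target = Set.Ioi (0 : ℝ) ×ˢ Set.Ioo (-Real.pi) Real.pi := rfl
  have hcongr : ∀ p ∈ Set.Ioi (0 : ℝ) ×ˢ Set.Ioo (-Real.pi) Real.pi,
      p.1 • ((Complex.polarCoord.symm p)⁻¹ * dbar h (Complex.polarCoord.symm p)) =
      (1 / 2 : ℂ) * fderiv ℝ h (p.1 * unitPt p.2) (unitPt p.2) +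
        I / 2 * fderiv ℝ h (p.1 * unitPt p.2) (I * unitPt p.2) := by
    intro p hp
    have : Complex.polarCoord.symm p = p.1 * unitPt p.2 := by
      rw [Complex.polarCoord_symm_apply, unitPt]
    rw [this]
    exact dbar_polar h p.1 hp.1 p.2 _
  rw [hS, setIntegral_congr_fun (measurableSet_Ioi.prod measurableSet_Ioo) hcongr,
    integral_add hA hB]
  have e1 : ∫ p in Set.Ioi (0 : ℝ) ×ˢ Set.Ioo (-Real.pi) Real.pi,
      (1 / 2 : ℂ) * fderiv ℝ h (p.1 * unitPt p.2) (unitPt p.2) = -Real.pi * h 0 := by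
    rw [Measure.volume_eq_prod, ← setIntegral_prod_swap,
      setIntegral_prod (fun z : ℝ × ℝ =>
        (1 / 2 : ℂ) * fderiv ℝ h (z.swap.1 * unitPt z.swap.2) (unitPt z.swap.2)) hA.swap]
    simp only [Prod.swap_prod_mk, integral_radial hh hc]
    rw [setIntegral_const]
    have : volume.real (Set.Ioo (-Real.pi) Real.pi) = 2 * Real.pi := by
      rw [Real.volume_real_Ioo_of_le (by linarith [Real.pi_pos])]; ring
    rw [this, real_smul]; push_cast; ring
  have e2 : ∫ p in Set.Ioi (0 : ℝ) ×ˢ Set.Ioo (-Real.pi) Real.pi,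
      I / 2 * fderiv ℝ h (p.1 * unitPt p.2) (I * unitPt p.2) = 0 := by
    rw [Measure.volume_eq_prod, setIntegral_prod _ hB]
    rw [setIntegral_congr_fun measurableSet_Ioi fun r hr => integral_angular hh hr]
    simp
  rw [e1, e2, add_zero]

lemma locallyIntegrable_inv : LocallyIntegrable (fun t : ℂ => t⁻¹) := by
  refine locallyIntegrable_of_norm_le_rpow (C := 1) (α := 1) (by simp) (by simp) ?_
    (by fun_prop)
  filter_upwards with t
  simp [Real.rpow_neg_one]

/-- The Cauchy transform `π⁻¹ (1 / t) ⋆ g`. -/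
noncomputable def cauchyTransform (g : ℂ → ℂ) : ℂ → ℂ :=
  fun z => (Real.pi : ℂ)⁻¹ *
    (convolution (fun t : ℂ => t⁻¹) g (ContinuousLinearMap.mul ℝ ℂ) volume) z

lemma contDiff_cauchyTransform {g : ℂ → ℂ} (hg : ContDiff ℝ (⊤ : ℕ∞) g)
    (hgc : HasCompactSupport g) : ContDiff ℝ (⊤ : ℕ∞) (cauchyTransform g) :=
  contDiff_const.mul
    (hgc.contDiff_convolution_right (ContinuousLinearMap.mul ℝ ℂ) locallyIntegrable_inv hg)

lemma dbar_comp_sub {g : ℂ → ℂ} (hg : ContDiff ℝ 1 g) (z t : ℂ) :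
    dbar (fun t => g (z - t)) t = -dbar g (z - t) := by
  have h1 : HasFDerivAt (fun t : ℂ => z - t) (-ContinuousLinearMap.id ℝ ℂ) t :=
    (hasFDerivAt_id t).const_sub z
  have h2 := ((hg.differentiable one_ne_zero (z - t)).hasFDerivAt.comp t h1).fderiv
  have h3 : fderiv ℝ (fun t => g (z - t)) t =
    (fderiv ℝ g (z - t)).comp (-ContinuousLinearMap.id ℝ ℂ) := h2
  simp [dbar, h3]
  ring

lemma dbar_cauchyTransform {g : ℂ → ℂ} (hg : ContDiff ℝ 1 g) (hgc : HasCompactSupport g) (z : ℂ) :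
    dbar (cauchyTransform g) z = g z := by
  have hF := (hgc.hasFDerivAt_convolution_right (ContinuousLinearMap.mul ℝ ℂ)
    locallyIntegrable_inv hg z).const_mul (Real.pi : ℂ)⁻¹
  have hcd := hg.continuous_fderiv one_ne_zero
  have happ : ∀ v : ℂ, fderiv ℝ (cauchyTransform g) z v =
      (Real.pi : ℂ)⁻¹ * ∫ t : ℂ, t⁻¹ * fderiv ℝ g (z - t) v := by
    intro v
    have : fderiv ℝ (cauchyTransform g) z = _ := hF.fderiv
    rw [this, smul_apply,
      convolution_precompR_apply (ContinuousLinearMap.mul ℝ ℂ) locallyIntegrable_inv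
        (hgc.fderiv ℝ) hcd]
    rfl
  have hint : ∀ v : ℂ, Integrable fun t : ℂ => t⁻¹ * fderiv ℝ g (z - t) v := by
    intro v
    have hcv : HasCompactSupport fun a => fderiv ℝ g a v :=
      (hgc.fderiv ℝ).comp_left (g := fun L : ℂ →L[ℝ] ℂ => L v) rfl
    exact hcv.convolutionExists_right (ContinuousLinearMap.mul ℝ ℂ) locallyIntegrable_inv
      (by fun_prop) z
  have key : ∫ t : ℂ, t⁻¹ * dbar g (z - t) = Real.pi * g z := by
    have hc2 : HasCompactSupport fun t => g (z - t) :=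
      hgc.comp_homeomorph (Homeomorph.subLeft z)
    have h := integral_inv_mul_dbar (h := fun t => g (z - t))
      (hg.comp (contDiff_const.sub contDiff_id)) hc2
    simp only [dbar_comp_sub hg, mul_neg, integral_neg, sub_zero] at h
    linear_combination -h
  have hsum : ∫ t : ℂ, t⁻¹ * dbar g (z - t) = (1 / 2 : ℂ) *
      ((∫ t : ℂ, t⁻¹ * fderiv ℝ g (z - t) 1) + I * ∫ t : ℂ, t⁻¹ * fderiv ℝ g (z - t) I) := by
    rw [← integral_const_mul I, ← integral_add (hint 1) ((hint I).const_mul I),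
      ← integral_const_mul]
    congr 1; ext t
    simp only [dbar, smul_eq_mul]; ring
  have hpi : (Real.pi : ℂ) ≠ 0 := by exact_mod_cast Real.pi_ne_zero
  rw [dbar, happ, happ, smul_eq_mul]
  have := hsum.symm.trans key
  rw [← mul_right_inj' hpi, ← this]
  linear_combination (1 / 2 : ℂ) * ((∫ t : ℂ, t⁻¹ * fderiv ℝ g (z - t) 1) +
    I * ∫ t : ℂ, t⁻¹ * fderiv ℝ g (z - t) I) * mul_inv_cancel₀ hpi

/-- Vanishing moments force the Cauchy integral to vanish outside any disc about the origin that
contains the support of `g`: inserting a factor `w / z` does not change the integral, and on the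
support this factor is bounded by `R / ‖z‖ < 1`. -/
lemma integral_inv_sub_mul_eq_zero {g : ℂ → ℂ} (hg : Continuous g) (hgc : HasCompactSupport g)
    (hm : ∀ n : ℕ, (∫ z : ℂ, z ^ n * g z) = 0) {R : ℝ} (hR0 : 0 < R)
    (hR : ∀ z, R < ‖z‖ → g z = 0) {z : ℂ} (hz : R < ‖z‖) :
    ∫ w : ℂ, (z - w)⁻¹ * g w = 0 := by
  have hz0 : z ≠ 0 := norm_pos_iff.mp (hR0.trans hz)
  have hsub : ∀ w, g w ≠ 0 → ‖w‖ ≤ R := fun w hw => by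
    by_contra! hc; exact hw (hR w hc)
  have hne : ∀ w, g w ≠ 0 → z - w ≠ 0 := fun w hw h0 => by
    have := hsub w hw
    rw [← sub_eq_zero.mp h0] at this
    linarith
  -- The integrand is dominated by a multiple of `‖g‖` since `‖z - w‖ ≥ ‖z‖ - R` on `supp g`.
  have hbd : ∀ w, ‖(z - w)⁻¹ * g w‖ ≤ (‖z‖ - R)⁻¹ * ‖g w‖ := by
    intro w
    by_cases hw : g w = 0
    · simp [hw]
    rw [norm_mul, norm_inv]
    have h1 := norm_sub_norm_le z w
    have h2 := hsub w hw
    gcongr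
    linarith
  have hgi : Integrable g := hg.integrable_of_hasCompactSupport hgc
  have hbn : ∀ (n : ℕ) w, ‖(w / z) ^ n * ((z - w)⁻¹ * g w)‖ ≤
      (R / ‖z‖) ^ n * ((‖z‖ - R)⁻¹ * ‖g w‖) := by
    intro n w
    by_cases hw : g w = 0
    · simp [hw]
    rw [norm_mul, norm_pow, norm_div]
    have := hsub w hw
    have := hbd w
    gcongr
  have hin : ∀ n : ℕ, Integrable fun w => (w / z) ^ n * ((z - w)⁻¹ * g w) := fun n =>
    ((hgi.norm.const_mul _).const_mul _).mono' (by fun_prop) (Filter.Eventually.of_forall (hbn n))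
  have hall : ∀ n : ℕ, ∫ w : ℂ, (w / z) ^ n * ((z - w)⁻¹ * g w) = ∫ w : ℂ, (z - w)⁻¹ * g w := by
    intro n
    induction n with
    | zero => simp
    | succ n ih =>
      rw [← ih, ← sub_eq_zero, ← integral_sub (hin _) (hin _)]
      have : ∀ w : ℂ, (w / z) ^ (n + 1) * ((z - w)⁻¹ * g w) - (w / z) ^ n * ((z - w)⁻¹ * g w) =
          -(z ^ (n + 1))⁻¹ * (w ^ n * g w) := by
        intro w
        by_cases hw : g w = 0
        · simp [hw]
        have h1 := mul_inv_cancel₀ (hne w hw)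
        have h2 := mul_inv_cancel₀ hz0
        rw [div_eq_mul_inv, mul_pow, mul_pow, ← inv_pow]
        linear_combination (-w ^ n * z⁻¹ ^ (n + 1) * g w) * h1 +
          (w ^ n * z⁻¹ ^ n * (z - w)⁻¹ * g w) * h2
      simp only [this]
      rw [integral_const_mul, hm, mul_zero]
  have hle : ∀ n : ℕ, ‖∫ w : ℂ, (z - w)⁻¹ * g w‖ ≤
      (R / ‖z‖) ^ n * ∫ w, (‖z‖ - R)⁻¹ * ‖g w‖ := by
    intro n
    rw [← hall n, ← integral_const_mul]
    exact norm_integral_le_of_norm_le ((hgi.norm.const_mul _).const_mul _)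
      (Filter.Eventually.of_forall (hbn n))
  have hlim := (tendsto_pow_atTop_nhds_zero_of_lt_one (r := R / ‖z‖) (by positivity)
    (by rwa [div_lt_one (hR0.trans hz)])).mul_const (∫ w, (‖z‖ - R)⁻¹ * ‖g w‖)
  rw [zero_mul] at hlim
  exact norm_le_zero_iff.mp (ge_of_tendsto' hlim hle)

lemma hasCompactSupport_cauchyTransform {g : ℂ → ℂ} (hg : Continuous g)
    (hgc : HasCompactSupport g) (hm : ∀ n : ℕ, (∫ z : ℂ, z ^ n * g z) = 0) :
    HasCompactSupport (cauchyTransform g) := by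
  obtain ⟨R, hR0, hR⟩ := exists_radius hgc
  refine HasCompactSupport.intro (isCompact_closedBall (0 : ℂ) R) fun z hz => ?_
  have hz : R < ‖z‖ := by simpa using hz
  have hconv : convolution (fun t : ℂ => t⁻¹) g (ContinuousLinearMap.mul ℝ ℂ) volume z =
      ∫ w : ℂ, (z - w)⁻¹ * g w := convolution_eq_swap _
  rw [cauchyTransform, hconv, integral_inv_sub_mul_eq_zero hg hgc hm hR0 hR hz,
    mul_zero]

/-- Integration by parts against the holomorphic function `zⁿ`. -/
lemma integral_pow_mul_dbar {f : ℂ → ℂ} (hf : ContDiff ℝ 1 f) (hfc : HasCompactSupport f) (n : ℕ) :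
    ∫ z : ℂ, z ^ n * dbar f z = 0 := by
  have hcd := hf.continuous_fderiv one_ne_zero
  have hcf := hf.continuous
  have hp : ∀ z v : ℂ, fderiv ℝ (fun z : ℂ => z ^ n) z v = n * z ^ (n - 1) * v := by
    intro z v
    have := ((hasDerivAt_pow n z).hasFDerivAt.restrictScalars ℝ).fderiv
    rw [this]; simp [mul_comm]
  have hcv : ∀ v : ℂ, HasCompactSupport fun a => fderiv ℝ f a v := fun v =>
    (hfc.fderiv ℝ).comp_left (g := fun L : ℂ →L[ℝ] ℂ => L v) rfl
  have hi : ∀ v : ℂ, Integrable fun z : ℂ => z ^ n * fderiv ℝ f z v := fun v =>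
    Continuous.integrable_of_hasCompactSupport (by fun_prop) (hcv v).mul_left
  have hibp : ∀ v : ℂ, ∫ z : ℂ, z ^ n * fderiv ℝ f z v =
      -(v * ∫ z : ℂ, n * z ^ (n - 1) * f z) := by
    intro v
    rw [integral_mul_fderiv_eq_neg_fderiv_mul_of_integrable (f := fun z : ℂ => z ^ n) ?_ (hi v) ?_
      (fun _ _ => by fun_prop) (fun _ _ => hf.differentiable one_ne_zero _)]
    · simp only [hp]
      rw [← integral_const_mul]
      congr 2; ext z; ring
    · simp only [hp]
      exact Continuous.integrable_of_hasCompactSupport (by fun_prop) hfc.mul_left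
    · exact Continuous.integrable_of_hasCompactSupport (by fun_prop) hfc.mul_left
  have : ∀ z : ℂ, z ^ n * dbar f z =
      (1 / 2 : ℂ) * (z ^ n * fderiv ℝ f z 1 + I * (z ^ n * fderiv ℝ f z I)) := by
    intro z; simp only [dbar, smul_eq_mul]; ring
  simp only [this]
  rw [integral_const_mul, integral_add (hi 1) ((hi I).const_mul I), integral_const_mul, hibp, hibp]
  linear_combination (-(1 / 2 : ℂ) * ∫ z : ℂ, n * z ^ (n - 1) * f z) * I_sq

/-- For smooth compactly supported `g : ℂ → ℂ`, the equation `∂̄f = g` has a smooth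
compactly supported solution `f` iff all moments `∫ zⁿ g(z) dA(z)` (n ∈ ℕ) vanish.
This expresses the vanishing criterion for the class of `g dz̄` in `H¹_c(ℂ, 𝒪)`. -/
theorem dbar_solvable_compact_support_iff_moments_vanish
    (g : ℂ → ℂ) (hg : ContDiff ℝ (⊤ : ℕ∞) g) (hgc : HasCompactSupport g) :
    (∃ f : ℂ → ℂ, ContDiff ℝ (⊤ : ℕ∞) f ∧ HasCompactSupport f ∧ ∀ z : ℂ, dbar f z = g z) ↔
    ∀ n : ℕ, (∫ z : ℂ, z ^ n * g z) = 0 := by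
  have h1 : (1 : WithTop ℕ∞) ≤ ((⊤ : ℕ∞) : WithTop ℕ∞) := by exact_mod_cast le_top
  constructor
  · rintro ⟨f, hf, hfc, hfg⟩ n
    simp only [← hfg]
    exact integral_pow_mul_dbar (hf.of_le h1) hfc n
  · intro hm
    exact ⟨cauchyTransform g, contDiff_cauchyTransform hg hgc,
      hasCompactSupport_cauchyTransform hg.continuous hgc hm,
      dbar_cauchyTransform (hg.of_le h1) hgc⟩
end

section
/- Let g₁, g₂ : ℂ × ℂ → ℂ be smooth functions with compact support contained in ℂ²∖{(0,0)}, satisfying ∂̄₂g₁ = ∂̄₁g₂ on ℂ², and let f : ℂ × ℂ → ℂ be the unique smooth compactly supported function on ℂ² with ∂̄₁f = g₁ and ∂̄₂f = g₂. Then there exists a smooth function F : ℂ × ℂ → ℂ with compact support contained in ℂ²∖{(0,0)} satisfying ∂̄₁F = g₁ and ∂̄₂F = g₂ if and only if f vanishes on some neighborhood of (0,0); in that case F = f. (This is the concrete form of the paper's computation that H¹_c(ℂ²∖{(0,0)}, 𝒪) ≅ H⁰_c({(0,0)}, i*𝒪), the space of germs at the origin Σ a_{ij} zⁱwʲ of holomorphic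 functions: the obstruction to solving ∂̄ with compact support away from the origin is exactly the germ of the canonical solution f at (0,0).) -/
/-!
A solution of `∂̄f = g₁ dz̄₁ + g₂ dz̄₂` with compact support is unique: the difference `h` of two
solutions satisfies `∂̄₁h = 0`, so each slice `h(·, z₂)` is an entire function of one variable with
compact support, which is zero by Liouville's theorem (`eq_zero_of_dbar1_eq_zero`). Hence any
solution supported away from the origin equals `f`, and one exists exactly when the support of `f`
itself avoids the origin, i.e. when `f` vanishes near it.
-/

open MeasureTheory Complex

/-- The Wirtinger derivative with respect to `z̄₁` of a function on `ℂ²`. -/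
noncomputable def dbar1 (f : ℂ × ℂ → ℂ) (p : ℂ × ℂ) : ℂ :=
  (1 / 2 : ℂ) * ((fderiv ℝ (fun w => f (w, p.2)) p.1) 1 +
    Complex.I • (fderiv ℝ (fun w => f (w, p.2)) p.1) Complex.I)

/-- The Wirtinger derivative with respect to `z̄₂` of a function on `ℂ²`. -/
noncomputable def dbar2 (f : ℂ × ℂ → ℂ) (p : ℂ × ℂ) : ℂ :=
  (1 / 2 : ℂ) * ((fderiv ℝ (fun w => f (p.1, w)) p.2) 1 +
    Complex.I • (fderiv ℝ (fun w => f (p.1, w)) p.2) Complex.I)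

lemma differentiableAt_slice {f : ℂ × ℂ → ℂ} (hf : Differentiable ℝ f) (p : ℂ × ℂ) :
    DifferentiableAt ℝ (fun w => f (w, p.2)) p.1 := by
  fun_prop

lemma dbar1_sub {f g : ℂ × ℂ → ℂ} (hf : Differentiable ℝ f) (hg : Differentiable ℝ g)
    (p : ℂ × ℂ) : dbar1 (fun q => f q - g q) p = dbar1 f p - dbar1 g p := by
  simp only [dbar1]
  rw [fderiv_fun_sub (differentiableAt_slice hf p) (differentiableAt_slice hg p)]
  simp only [sub_apply, smul_eq_mul]
  ring

/-- The equation `∂̄₁h = 0` is the Cauchy–Riemann equation on the slices `z₂ = const`. -/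
lemma differentiable_slice_of_dbar1_eq_zero {h : ℂ × ℂ → ℂ} (hd : Differentiable ℝ h)
    (h0 : ∀ p, dbar1 h p = 0) (b : ℂ) : Differentiable ℂ (fun w => h (w, b)) := by
  intro a
  refine differentiableAt_complex_iff_differentiableAt_real.2
    ⟨differentiableAt_slice hd (a, b), ?_⟩
  have hz := h0 (a, b)
  simp only [dbar1, smul_eq_mul] at hz ⊢
  linear_combination (-2 * I) * hz + (fderiv ℝ (fun w => h (w, b)) a) I * I_mul_I

/-- Compact support in both variables kills every slice, so the single equation in `z̄₁` already
forces `h = 0`. -/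
lemma eq_zero_of_dbar1_eq_zero {h : ℂ × ℂ → ℂ} (hd : Differentiable ℝ h)
    (hc : HasCompactSupport h) (h0 : ∀ p, dbar1 h p = 0) (p : ℂ × ℂ) : h p = 0 := by
  have hslice : HasCompactSupport (fun w => h (w, p.2)) := by
    refine HasCompactSupport.intro (hc.isCompact.image continuous_fst) fun w hw => ?_
    by_contra hne
    exact hw ⟨(w, p.2), subset_tsupport h hne, rfl⟩
  exact (differentiable_slice_of_dbar1_eq_zero hd h0 p.2).apply_eq_of_tendsto_cocompact p.1
    hslice.is_zero_at_infty

/-- Let `g₁ dz̄₁ + g₂ dz̄₂` be a `∂̄`-closed smooth `(0,1)`-form on `ℂ²` with compact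
support contained in `ℂ²∖{(0,0)}`, and let `f` be the canonical (unique) smooth
compactly supported solution of `∂̄f = g₁ dz̄₁ + g₂ dz̄₂` on `ℂ²`.  Then a smooth
solution `F` with compact support contained in `ℂ²∖{(0,0)}` exists iff `f` vanishes
on a neighborhood of `(0,0)`, and in that case `F = f`.  This expresses
`H¹_c(ℂ²∖{(0,0)}, 𝒪) ≅ H⁰_c({(0,0)}, i*𝒪)`: the obstruction is the germ of `f`
at the origin. -/
theorem dbar_solvable_punctured_C2_iff_germ_vanishes
    (g₁ g₂ : ℂ × ℂ → ℂ)
    (hg₁ : ContDiff ℝ (⊤ : ℕ∞) g₁) (hg₁c : HasCompactSupport g₁)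
    (hg₁0 : tsupport g₁ ⊆ {((0 : ℂ), (0 : ℂ))}ᶜ)
    (hg₂ : ContDiff ℝ (⊤ : ℕ∞) g₂) (hg₂c : HasCompactSupport g₂)
    (hg₂0 : tsupport g₂ ⊆ {((0 : ℂ), (0 : ℂ))}ᶜ)
    (hclosed : ∀ p : ℂ × ℂ, dbar2 g₁ p = dbar1 g₂ p)
    (f : ℂ × ℂ → ℂ) (hf : ContDiff ℝ (⊤ : ℕ∞) f) (hfc : HasCompactSupport f)
    (hfsol : ∀ p : ℂ × ℂ, dbar1 f p = g₁ p ∧ dbar2 f p = g₂ p) :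
    ((∃ F : ℂ × ℂ → ℂ, ContDiff ℝ (⊤ : ℕ∞) F ∧ HasCompactSupport F ∧
        tsupport F ⊆ {((0 : ℂ), (0 : ℂ))}ᶜ ∧
        ∀ p : ℂ × ℂ, dbar1 F p = g₁ p ∧ dbar2 F p = g₂ p) ↔
      ∀ᶠ p in nhds ((0 : ℂ), (0 : ℂ)), f p = 0) ∧
    ∀ F : ℂ × ℂ → ℂ, ContDiff ℝ (⊤ : ℕ∞) F → HasCompactSupport F →
      tsupport F ⊆ {((0 : ℂ), (0 : ℂ))}ᶜ →
      (∀ p : ℂ × ℂ, dbar1 F p = g₁ p ∧ dbar2 F p = g₂ p) → F = f := by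
  have huniq : ∀ F : ℂ × ℂ → ℂ, ContDiff ℝ (⊤ : ℕ∞) F → HasCompactSupport F →
      (∀ p : ℂ × ℂ, dbar1 F p = g₁ p ∧ dbar2 F p = g₂ p) → F = f := by
    intro F hF hFc hFsol
    have hFd : Differentiable ℝ F := hF.differentiable (by simp)
    have hfd : Differentiable ℝ f := hf.differentiable (by simp)
    funext p
    refine sub_eq_zero.1 (eq_zero_of_dbar1_eq_zero (hFd.sub hfd) (hFc.sub hfc) (fun q => ?_) p)
    exact (dbar1_sub hFd hfd q).trans (by rw [(hFsol q).1, (hfsol q).1, sub_self])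
  have hgerm : tsupport f ⊆ {((0 : ℂ), (0 : ℂ))}ᶜ ↔ ∀ᶠ p in nhds ((0 : ℂ), (0 : ℂ)), f p = 0 := by
    rw [Set.subset_compl_singleton_iff]
    exact notMem_tsupport_iff_eventuallyEq
  refine ⟨⟨?_, fun h => ⟨f, hf, hfc, hgerm.2 h, hfsol⟩⟩, fun F hF hFc _ => huniq F hF hFc⟩
  rintro ⟨F, hF, hFc, hF0, hFsol⟩
  exact hgerm.1 (huniq F hF hFc hFsol ▸ hF0)
end
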